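/- Let E = (E;⊕,',0,1) be a lattice effect algebra. Let ℝ(E) = (E;·,',0,1) be the effect groupoid with x·y := ((x'∧y)⊕y')', and let 𝔼(ℝ(E)) = (E;⊕₁,',0,1) be the lattice effect algebra with x⊕₁y := (x'·y')' defined whenever x·y = 0. Then 𝔼(ℝ(E)) = E: for all a, b ∈ E, a⊕₁b exists if and only if a⊕b exists, and in that case a⊕₁b = a⊕b. -/

import Mathlib

/-- An effect algebra: a partial algebra (E;⊕,',0,1). The partial operation ⊕ is
modeled by a definedness predicate `D` together with a total function `add` whose
value is only meaningful on defined pairs. -/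
structure EffectAlgebra (E : Type*) where
  /-- definedness of `x ⊕ y` -/
  D : E → E → Prop
  /-- the value of `x ⊕ y` (meaningful only when `D x y`) -/
  add : E → E → E
  zero : E
  one : E
  /-- the complement `x'` -/
  compl : E → E
  /-- (E1) commutativity -/
  E1 : ∀ x y, D x y → D y x ∧ add x y = add y x
  /-- (E2) associativity -/
  E2 : ∀ x y z, D x y → D (add x y) z →
    D y z ∧ D x (add y z) ∧ add (add x y) z = add x (add y z)
  /-- (E3) existence of the complement -/
  E3a : ∀ x, D x (compl x)
  E3b : ∀ x, add x (compl x) = one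
  /-- (E3) uniqueness of the complement -/
  E3c : ∀ x y, D x y → add x y = one → y = compl x
  /-- (E4) -/
  E4 : ∀ x, D x one → x = zero

/-- The induced order of an effect algebra: `a ≤ b` iff `a ⊕ c = b` for some `c`. -/
def EffectAlgebra.le {E : Type*} (A : EffectAlgebra E) (a b : E) : Prop :=
  ∃ c, A.D a c ∧ A.add a c = b

/-- A lattice effect algebra: an effect algebra whose induced order is a lattice,
with meet `inf` and join `sup`. -/
structure LatticeEffectAlgebra (E : Type*) extends EffectAlgebra E where
  inf : E → E → E
  sup : E → E → E
  inf_le_left : ∀ a b, toEffectAlgebra.le (inf a b) a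
  inf_le_right : ∀ a b, toEffectAlgebra.le (inf a b) b
  le_inf : ∀ a b c, toEffectAlgebra.le c a → toEffectAlgebra.le c b →
    toEffectAlgebra.le c (inf a b)
  le_sup_left : ∀ a b, toEffectAlgebra.le a (sup a b)
  le_sup_right : ∀ a b, toEffectAlgebra.le b (sup a b)
  sup_le : ∀ a b c, toEffectAlgebra.le a c → toEffectAlgebra.le b c →
    toEffectAlgebra.le (sup a b) c

/-- The total operation `x·y := ((x'∧y)⊕y')'` on a lattice effect algebra
(well defined since `x'∧y ≤ y`). -/
def LatticeEffectAlgebra.prod {E : Type*} (A : LatticeEffectAlgebra E) (x y : E) : E :=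
  A.compl (A.add (A.inf (A.compl x) y) (A.compl y))


/-! Uniqueness of complements turns `x ⊕ y ⊕ (x ⊕ y)' = 1` into `y ⊕ (x ⊕ y)' = x'`. Everything
about the order comes from this rotation; in particular `x ⊕ y` is defined iff `x ≤ y'`.

Now `a·b = 0` says `(a' ∧ b) ⊕ b' = 1`. By uniqueness of complements this means `a' ∧ b = b`, that
is `b ≤ a'`, so that `a ⊕ b` is defined. Moreover `(a'·b')' = (a ∧ b') ⊕ b` for all `a` and `b`,
and `a ∧ b' = a` as soon as `a ⊕ b` is defined. -/

namespace EffectAlgebra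

variable {E : Type*} {A : EffectAlgebra E} {x y : E}

theorem D.symm (h : A.D x y) : A.D y x :=
  (A.E1 x y h).1

theorem D.add_comm (h : A.D x y) : A.add x y = A.add y x :=
  (A.E1 x y h).2

theorem D.add_eq_one_iff (h : A.D x y) : A.add x y = A.one ↔ y = A.compl x :=
  ⟨A.E3c x y h, fun hy => hy ▸ A.E3b x⟩

theorem D.compl_add (h : A.D x y) : A.D y (A.compl (A.add x y)) :=
  (A.E2 _ _ _ h (A.E3a _)).1

theorem D.add_compl_add (h : A.D x y) : A.add y (A.compl (A.add x y)) = A.compl x := by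
  obtain ⟨-, hD, hassoc⟩ := A.E2 _ _ _ h (A.E3a _)
  exact hD.add_eq_one_iff.1 (hassoc.symm.trans (A.E3b _))

variable (A) in
theorem compl_add_self (x : E) : A.add (A.compl x) x = A.one :=
  (A.E3a x).add_comm.symm.trans (A.E3b x)

variable (A) in
theorem compl_compl (x : E) : A.compl (A.compl x) = x :=
  ((A.E3a x).symm.add_eq_one_iff.1 (A.compl_add_self x)).symm

variable (A) in
theorem compl_one : A.compl A.one = A.zero :=
  A.E4 _ (A.E3a A.one).symm

variable (A) in
theorem compl_zero : A.compl A.zero = A.one := by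
  rw [← A.compl_one, A.compl_compl]

theorem compl_eq_zero_iff : A.compl x = A.zero ↔ x = A.one := by
  refine ⟨fun h => ?_, fun h => h ▸ A.compl_one⟩
  rw [← A.compl_compl x, h, A.compl_zero]

variable (A) in
theorem d_zero (x : E) : A.D x A.zero := by
  have hD := (A.E3a x).symm.compl_add
  rwa [A.compl_add_self, A.compl_one] at hD

variable (A) in
theorem add_zero (x : E) : A.add x A.zero = x := by
  have hadd := (A.E3a x).symm.add_compl_add
  rwa [A.compl_add_self, A.compl_one, A.compl_compl] at hadd

theorem D.left_eq_zero_of_add_eq_zero (h : A.D x y) (hxy : A.add x y = A.zero) :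
    x = A.zero := by
  have hD : A.D x (A.compl (A.add y x)) := h.symm.compl_add
  rw [← h.add_comm, hxy, A.compl_zero] at hD
  exact A.E4 x hD

theorem D.right_eq_zero_of_add_eq_left (h : A.D x y) (hxy : A.add x y = x) : y = A.zero := by
  have hadd : A.add y (A.compl x) = A.compl x := by
    simpa only [hxy] using h.add_compl_add
  have hcompl : A.one = A.compl y := by
    simpa only [hxy, hadd, A.E3b] using h.compl_add.add_compl_add
  rw [← A.compl_compl y, ← hcompl, A.compl_one]

variable (A) in
theorem le_refl (x : E) : A.le x x :=
  ⟨A.zero, A.d_zero x, A.add_zero x⟩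

theorem le_antisymm (hxy : A.le x y) (hyx : A.le y x) : x = y := by
  obtain ⟨c, hxc, rfl⟩ := hxy
  obtain ⟨d, hd, hadd⟩ := hyx
  obtain ⟨hcd, hD, hassoc⟩ := A.E2 _ _ _ hxc hd
  have hcd_zero : A.add c d = A.zero :=
    hD.right_eq_zero_of_add_eq_left (hassoc.symm.trans hadd)
  rw [hcd.left_eq_zero_of_add_eq_zero hcd_zero, A.add_zero]

theorem d_iff_le_compl : A.D x y ↔ A.le x (A.compl y) := by
  refine ⟨fun h => ⟨_, h.symm.compl_add, h.symm.add_compl_add⟩, ?_⟩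
  rintro ⟨c, hxc, hc⟩
  have hD : A.D (A.add c x) y := by
    rw [← hxc.add_comm, hc]
    exact (A.E3a y).symm
  exact (A.E2 _ _ _ hxc.symm hD).1

end EffectAlgebra

namespace LatticeEffectAlgebra

variable {E : Type*} {A : LatticeEffectAlgebra E} {a b : E}

theorem inf_eq_left_iff : A.inf a b = a ↔ A.le a b :=
  ⟨fun h => h ▸ A.inf_le_right a b, fun h =>
    EffectAlgebra.le_antisymm (A.inf_le_left a b) (A.le_inf a b a (A.le_refl a) h)⟩

theorem inf_eq_right_iff : A.inf a b = b ↔ A.le b a :=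
  ⟨fun h => h ▸ A.inf_le_left a b, fun h =>
    EffectAlgebra.le_antisymm (A.inf_le_right a b) (A.le_inf a b b h (A.le_refl b))⟩

variable (A) in
theorem d_inf_compl (a b : E) : A.D (A.inf a b) (A.compl b) := by
  rw [EffectAlgebra.d_iff_le_compl, A.compl_compl]
  exact A.inf_le_right a b

theorem prod_eq_zero_iff : A.prod a b = A.zero ↔ A.D a b := by
  have hD : A.D (A.compl b) (A.inf (A.compl a) b) := (A.d_inf_compl (A.compl a) b).symm
  calc A.prod a b = A.zero
    _ ↔ A.add (A.inf (A.compl a) b) (A.compl b) = A.one := EffectAlgebra.compl_eq_zero_iff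
    _ ↔ A.inf (A.compl a) b = b := by
      rw [← hD.add_comm, hD.add_eq_one_iff, A.compl_compl]
    _ ↔ A.D b a := inf_eq_right_iff.trans EffectAlgebra.d_iff_le_compl.symm
    _ ↔ A.D a b := ⟨EffectAlgebra.D.symm, EffectAlgebra.D.symm⟩

variable (A) in
theorem compl_prod_compl_compl (a b : E) :
    A.compl (A.prod (A.compl a) (A.compl b)) = A.add (A.inf a (A.compl b)) b := by
  simp only [prod, A.compl_compl]

end LatticeEffectAlgebra

/-- `𝔼(ℝ(E)) = E`: for a lattice effect algebra `E` with `x·y := ((x'∧y)⊕y')'` and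
`x⊕₁y := (x'·y')'` defined whenever `x·y = 0`, for all `a, b` the sum `a⊕₁b` exists
iff `a⊕b` exists, and in that case `a⊕₁b = a⊕b`. -/
theorem round_trip_effect_algebra {E : Type*} (A : LatticeEffectAlgebra E) (a b : E) :
    (A.prod a b = A.zero ↔ A.D a b) ∧
    (A.D a b → A.compl (A.prod (A.compl a) (A.compl b)) = A.add a b) := by
  refine ⟨LatticeEffectAlgebra.prod_eq_zero_iff, fun h => ?_⟩
  have hinf : A.inf a (A.compl b) = a :=
    LatticeEffectAlgebra.inf_eq_left_iff.2 (EffectAlgebra.d_iff_le_compl.1 h)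
  rw [A.compl_prod_compl_compl, hinf]
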